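/- Let A₁ ∈ ℝ^{n×n}, A₂ ∈ ℝ^{n×N}, A_s ∈ ℝ^{N×n}, B ∈ ℝ^{n×m}, Ā₁ = A₁ + A₂·A_s, and Q : ℝⁿ → ℝᴺ. Let the disturbance-free data satisfy X₁ = Ā₁·X₀ + A₂·Q₀ + B·U₀, and let G₁ ∈ ℝ^{T×n}, G₂ ∈ ℝ^{T×N} satisfy X₀·G₁ = I_n, Q₀·G₁ = 0, X₀·G₂ = 0, Q₀·G₂ = I_N; set K₁ = U₀·G₁, K₂ = U₀·G₂. Let F ∈ ℝ^{s×n}, g ∈ ℝ^s, λ ∈ (0,1], x₁ ∈ ℝⁿ, L₁ ∈ ℝ^{N×n}, and v ∈ ℝⁿ with L₁·v = Q(x₁). Suppose there exist P_s ∈ ℝ^{s×s} with all entries nonnegative (with rows αᵢᵀ) and P_x ∈ ℝ^{s×n} (with rows βᵢᵀ) such that: (i) P_s·F − F·X₁·G₁ = P_x; (ii) F·X₁·G₂·L₁ = P_x; (iii) for each i, x₁ is a global minimizer over ℝⁿ of φᵢ(x) = αᵢᵀ·(F·x − g) − Fᵢ·(X₁·G₁·x + X₁·G₂·Q(x)); and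 (iv) P_s·g + P_x·(v − x₁) ≤ λ·g componentwise. Then for every x with F·x ≤ g, F·((Ā₁ + B·K₁)·x + (A₂ + B·K₂)·Q(x)) ≤ λ·g componentwise; i.e., the safe set S(F,g) is λ-contractive (hence robustly invariant) under the controller u = K₁x + K₂Q(x). -/

import Mathlib

open Matrix

/-!
At a state `x` of the safe set the multiplier term `P (F x - g)` is nonpositive, so
`F f(x) ≤ -ℒ(x) ≤ -ℒ(x₁)`: weak duality, applied to all rows of `F` at once. The stationarity
conditions (i) and (ii) give `-ℒ(x₁) = P g + Pₓ (v - x₁)`, which (iv) bounds by `λ g`. The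
data identities turn `X₁ G₁` and `X₁ G₂` into the closed-loop matrices.
-/

/-- The polyhedral safe set `S(F, g)`. A closed loop `f` is `λ`-contractive on it when `f` maps
`safeSet F g` into `safeSet F (λ • g)`; this inclusion is stated with `Set.MapsTo`. -/
def safeSet {R n ι : Type*} [NonUnitalNonAssocSemiring R] [LE R] [Fintype n]
    (F : Matrix ι n R) (g : ι → R) : Set (n → R) :=
  {x | F *ᵥ x ≤ g}

section Lagrangian

variable {R X ι κ : Type*} [Fintype ι]

/-- The Lagrangians of the problems of maximizing `h x i` subject to `c x ≤ 0`, collected in one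
vector: row `i` of `P` holds the multipliers of problem `i`. As the problems are maximizations, `h`
enters with a minus sign and the Lagrangians are to be minimized over `x`. -/
def lagrangian [NonUnitalNonAssocRing R] (P : Matrix κ ι R) (c : X → ι → R) (h : X → κ → R)
    (x : X) : κ → R :=
  P *ᵥ c x - h x

theorem le_neg_lagrangian_of_feasible [NonUnitalNonAssocRing R] [PartialOrder R]
    [IsOrderedAddMonoid R] [PosMulMono R]
    {P : Matrix κ ι R} {c : X → ι → R} {h : X → κ → R} {x : X}
    (hP : ∀ i j, 0 ≤ P i j) (hx : c x ≤ 0) :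
    h x ≤ -lagrangian P c h x := by
  have hPc : P *ᵥ c x ≤ 0 := fun i =>
    Finset.sum_nonpos fun j _ => mul_nonpos_of_nonneg_of_nonpos (hP i j) (hx j)
  simpa only [lagrangian, neg_sub, le_sub_self_iff] using hPc

theorem mapsTo_safeSet_of_lagrangian_le [NonUnitalNonAssocRing R] [PartialOrder R]
    [IsOrderedAddMonoid R] [PosMulMono R] {n n' : Type*} [Fintype n] [Fintype n']
    {P : Matrix κ ι R} {F : Matrix ι n R} {g : ι → R} {F' : Matrix κ n' R} {g' : κ → R}
    {f : (n → R) → n' → R} {ℓ : κ → R} (hP : ∀ i j, 0 ≤ P i j)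
    (hℓ : ∀ x ∈ safeSet F g, ℓ ≤ lagrangian P (fun x => F *ᵥ x - g) (fun x => F' *ᵥ f x) x)
    (hg' : -ℓ ≤ g') :
    Set.MapsTo f (safeSet F g) (safeSet F' g') := fun x hx =>
  calc
    F' *ᵥ f x ≤ -lagrangian P (fun x => F *ᵥ x - g) (fun x => F' *ᵥ f x) x :=
      le_neg_lagrangian_of_feasible (c := fun x => F *ᵥ x - g) (h := fun x => F' *ᵥ f x) hP
        (sub_nonpos.mpr hx)
    _ ≤ -ℓ := neg_le_neg (hℓ x hx)
    _ ≤ g' := hg'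

theorem neg_lagrangian_eq_of_stationary [NonUnitalRing R] {n n' p : Type*} [Fintype n]
    [Fintype n'] [Fintype p]
    {P : Matrix κ ι R} {F : Matrix ι n R} {g : ι → R} {F' : Matrix κ n' R}
    {M : Matrix n' n R} {M' : Matrix n' p R} {q : (n → R) → p → R}
    {L : Matrix p n R} {Px : Matrix κ n R} {x v : n → R} (hv : L *ᵥ v = q x)
    (hlin : P * F - F' * M = Px) (hrem : F' * M' * L = Px) :
    -lagrangian P (fun x => F *ᵥ x - g) (fun x => F' *ᵥ (M *ᵥ x + M' *ᵥ q x)) x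
      = P *ᵥ g + Px *ᵥ (v - x) := by
  have hPx_v : Px *ᵥ v = F' *ᵥ (M' *ᵥ q x) := by
    rw [← hrem, ← hv, mulVec_mulVec, mulVec_mulVec, Matrix.mul_assoc]
  have hPx_x : Px *ᵥ x = P *ᵥ (F *ᵥ x) - F' *ᵥ (M *ᵥ x) := by
    rw [← hlin, sub_mulVec, mulVec_mulVec, mulVec_mulVec]
  rw [lagrangian, mulVec_sub, mulVec_add, mulVec_sub, hPx_v, hPx_x]
  abel

end Lagrangian

theorem data_mul_eq {R n n' p m t k : Type*} [NonUnitalSemiring R] [Fintype n] [Fintype p]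
    [Fintype m] [Fintype t]
    {A : Matrix n' n R} {A₂ : Matrix n' p R} {B : Matrix n' m R}
    {X₀ : Matrix n t R} {X₁ : Matrix n' t R} {Q₀ : Matrix p t R} {U₀ : Matrix m t R}
    (hdata : X₁ = A * X₀ + A₂ * Q₀ + B * U₀) (G : Matrix t k R) :
    X₁ * G = A * (X₀ * G) + A₂ * (Q₀ * G) + B * (U₀ * G) := by
  simp only [hdata, Matrix.add_mul, Matrix.mul_assoc]

theorem data_based_primal_dual_safe_control_general
    {R n p m t ι : Type*} [Ring R] [PartialOrder R] [IsOrderedRing R]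
    [Fintype n] [DecidableEq n] [Fintype p] [DecidableEq p] [Fintype m] [Fintype t] [Fintype ι]
    {A : Matrix n n R} {A₂ : Matrix n p R} {B : Matrix n m R} {Q : (n → R) → p → R}
    {U₀ : Matrix m t R} {X₀ X₁ : Matrix n t R} {Q₀ : Matrix p t R}
    (hdata : X₁ = A * X₀ + A₂ * Q₀ + B * U₀)
    {G₁ : Matrix t n R} {G₂ : Matrix t p R}
    (hX₀G₁ : X₀ * G₁ = 1) (hQ₀G₁ : Q₀ * G₁ = 0) (hX₀G₂ : X₀ * G₂ = 0) (hQ₀G₂ : Q₀ * G₂ = 1)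
    {K₁ : Matrix m n R} (hK₁ : K₁ = U₀ * G₁) {K₂ : Matrix m p R} (hK₂ : K₂ = U₀ * G₂)
    {F : Matrix ι n R} {g : ι → R} {lam : R}
    {x₁ : n → R} {L₁ : Matrix p n R} {v : n → R} (hv : L₁ *ᵥ v = Q x₁)
    {Ps : Matrix ι ι R} (hPs : ∀ i j, 0 ≤ Ps i j) {Px : Matrix ι n R}
    (hlin : Ps * F - F * (X₁ * G₁) = Px) (hrem : F * (X₁ * G₂) * L₁ = Px)
    (hmin : IsMinOn
      (lagrangian Ps (fun x => F *ᵥ x - g)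
        (fun x => F *ᵥ ((X₁ * G₁) *ᵥ x + (X₁ * G₂) *ᵥ Q x)))
      (safeSet F g) x₁)
    (hbound : Ps *ᵥ g + Px *ᵥ (v - x₁) ≤ lam • g) :
    Set.MapsTo (fun x => (A + B * K₁) *ᵥ x + (A₂ + B * K₂) *ᵥ Q x)
      (safeSet F g) (safeSet F (lam • g)) := by
  have hclosed₁ : X₁ * G₁ = A + B * K₁ := by
    rw [data_mul_eq hdata, hX₀G₁, hQ₀G₁, hK₁, Matrix.mul_one, Matrix.mul_zero, add_zero]
  have hclosed₂ : X₁ * G₂ = A₂ + B * K₂ := by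
    rw [data_mul_eq hdata, hX₀G₂, hQ₀G₂, hK₂, Matrix.mul_one, Matrix.mul_zero, zero_add]
  rw [← hclosed₁, ← hclosed₂]
  exact mapsTo_safeSet_of_lagrangian_le hPs (isMinOn_iff.mp hmin)
    ((neg_lagrangian_eq_of_stationary hv hlin hrem).trans_le hbound)

/-- Theorem 2, disturbance-free case: data-based primal-dual
safe control design. The safe set is `λ`-contractive under the controller
`u = K₁x + K₂Q(x)`. -/
theorem data_based_primal_dual_safe_control
    (n N m T s : ℕ)
    (A₁ : Matrix (Fin n) (Fin n) ℝ) (A₂ : Matrix (Fin n) (Fin N) ℝ)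
    (As : Matrix (Fin N) (Fin n) ℝ) (B : Matrix (Fin n) (Fin m) ℝ)
    (Abar : Matrix (Fin n) (Fin n) ℝ) (hAbar : Abar = A₁ + A₂ * As)
    (Q : (Fin n → ℝ) → (Fin N → ℝ))
    (U₀ : Matrix (Fin m) (Fin T) ℝ)
    (X₀ X₁ : Matrix (Fin n) (Fin T) ℝ)
    (Q₀ : Matrix (Fin N) (Fin T) ℝ)
    (hdata : X₁ = Abar * X₀ + A₂ * Q₀ + B * U₀)
    (G₁ : Matrix (Fin T) (Fin n) ℝ) (G₂ : Matrix (Fin T) (Fin N) ℝ)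
    (hG11 : X₀ * G₁ = 1) (hG21 : Q₀ * G₁ = 0)
    (hG12 : X₀ * G₂ = 0) (hG22 : Q₀ * G₂ = 1)
    (K₁ : Matrix (Fin m) (Fin n) ℝ) (hK₁ : K₁ = U₀ * G₁)
    (K₂ : Matrix (Fin m) (Fin N) ℝ) (hK₂ : K₂ = U₀ * G₂)
    (F : Matrix (Fin s) (Fin n) ℝ) (g : Fin s → ℝ)
    (lam : ℝ) (hlam : 0 < lam ∧ lam ≤ 1)
    (x₁ : Fin n → ℝ) (L₁ : Matrix (Fin N) (Fin n) ℝ)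
    (v : Fin n → ℝ) (hv : L₁ *ᵥ v = Q x₁)
    (Ps : Matrix (Fin s) (Fin s) ℝ) (hPs : ∀ i j, 0 ≤ Ps i j)
    (Px : Matrix (Fin s) (Fin n) ℝ)
    (h1 : Ps * F - F * (X₁ * G₁) = Px)
    (h2 : F * (X₁ * G₂) * L₁ = Px)
    (h3 : ∀ (i : Fin s) (x : Fin n → ℝ),
        (Ps i) ⬝ᵥ (F *ᵥ x₁ - g) - (F i) ⬝ᵥ ((X₁ * G₁) *ᵥ x₁ + (X₁ * G₂) *ᵥ Q x₁)
          ≤ (Ps i) ⬝ᵥ (F *ᵥ x - g) - (F i) ⬝ᵥ ((X₁ * G₁) *ᵥ x + (X₁ * G₂) *ᵥ Q x))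
    (h4 : Ps *ᵥ g + Px *ᵥ (v - x₁) ≤ lam • g) :
    ∀ x : Fin n → ℝ, F *ᵥ x ≤ g →
      F *ᵥ ((Abar + B * K₁) *ᵥ x + (A₂ + B * K₂) *ᵥ Q x) ≤ lam • g :=
  fun _ hx => data_based_primal_dual_safe_control_general hdata hG11 hG21 hG12 hG22 hK₁ hK₂ hv hPs
    h1 h2 (isMinOn_iff.mpr fun x _ i => h3 i x) h4 hx
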